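/- Let J(x) = x·tanh x, J'(ξ) = tanh ξ + ξ(1 − tanh²ξ), Λ(ξ) = J'(ξ)² − 4J(ξ), and Ω(ξ,η,ζ) = J(ξ)² + J(η)² + J(ζ)² − 2J(ξ)J(η) − 2J(η)J(ζ) − 2J(ζ)J(ξ). Then for every fixed real ξ, the function η ↦ η⁻²·Ω(ξ, η, −ξ−η) tends to Λ(ξ) as η → 0 through nonzero values. -/

import Mathlib

open Filter Topology

noncomputable def J (x : ℝ) : ℝ := x * Real.tanh x

noncomputable def J' (ξ : ℝ) : ℝ := Real.tanh ξ + ξ * (1 - Real.tanh ξ ^ 2)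

noncomputable def Λ (ξ : ℝ) : ℝ := J' ξ ^ 2 - 4 * J ξ

noncomputable def Ω (ξ η ζ : ℝ) : ℝ :=
  J ξ ^ 2 + J η ^ 2 + J ζ ^ 2 - 2 * J ξ * J η - 2 * J η * J ζ - 2 * J ζ * J ξ

theorem hasDerivAt_tanh_aux (x : ℝ) : HasDerivAt Real.tanh (1 - Real.tanh x ^ 2) x := by
  have hc : Real.cosh x ≠ 0 := (Real.cosh_pos x).ne'
  have h := (Real.hasDerivAt_sinh x).div (Real.hasDerivAt_cosh x) hc
  have e : Real.tanh = Real.sinh / Real.cosh := by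
    funext y
    simp [Real.tanh_eq_sinh_div_cosh]
  rw [Real.tanh_eq_sinh_div_cosh, e]
  refine h.congr_deriv ?_
  field_simp

theorem hasDerivAt_J_aux (x : ℝ) : HasDerivAt J (J' x) x := by
  have h := (hasDerivAt_id x).mul (hasDerivAt_tanh_aux x)
  have e : J = id * Real.tanh := rfl
  rw [e]
  refine h.congr_deriv ?_
  simp [J']

theorem J_neg_aux (x : ℝ) : J (-x) = J x := by
  simp [J, Real.tanh_neg]

/-- On the line `η = 0` of the resonant plane, `η⁻² Ω(ξ,η,−ξ−η)` has the limit
`Λ(ξ) = J'(ξ)² − 4 J(ξ)`. -/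
theorem resonance_limit_eta_zero (ξ : ℝ) :
    Tendsto (fun η : ℝ => (η ^ 2)⁻¹ * Ω ξ η (-ξ - η)) (𝓝[≠] (0 : ℝ)) (𝓝 (Λ ξ)) := by
  have h1 := (hasDerivAt_J_aux ξ).tendsto_slope_zero
  have h2 := (hasDerivAt_tanh_aux 0).tendsto_slope_zero
  have h3 : Tendsto Real.tanh (𝓝[≠] (0 : ℝ)) (𝓝 0) := by
    have h := (hasDerivAt_tanh_aux 0).continuousAt.tendsto
    rw [Real.tanh_zero] at h
    exact h.mono_left nhdsWithin_le_nhds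
  have h4 : Tendsto (fun η : ℝ => J (ξ + η)) (𝓝[≠] (0 : ℝ)) (𝓝 (J ξ)) := by
    have hJ : Continuous J :=
      continuous_iff_continuousAt.2 fun x => (hasDerivAt_J_aux x).continuousAt
    have h : Continuous fun η : ℝ => J (ξ + η) := hJ.comp (by fun_prop)
    have h' := h.tendsto 0
    simp only [add_zero] at h'
    exact h'.mono_left nhdsWithin_le_nhds
  simp only [zero_add, Real.tanh_zero, sub_zero, smul_eq_mul] at h1 h2
  have key := ((h1.pow 2).add (h3.pow 2)).sub ((h2.const_mul 2).mul (h4.const_add (J ξ)))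
  have e : J' ξ ^ 2 + 0 ^ 2 - 2 * (1 - 0 ^ 2) * (J ξ + J ξ) = Λ ξ := by
    unfold Λ
    ring
  rw [e] at key
  refine key.congr' ?_
  filter_upwards [self_mem_nhdsWithin] with η hη
  have hη' : η ≠ 0 := hη
  have e2 : J (-ξ - η) = J (ξ + η) := by
    rw [← J_neg_aux]
    congr 1
    ring
  have e3 : J η = η * Real.tanh η := rfl
  simp only [Ω, e2, e3]
  field_simp
  ring
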